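/- Let b, t, γ be positive integers with t ≥ 2 and 3t ≤ b. Let F be a nonempty finite set and let f : Σ_2^b → F be a one-burst-t-deletion syndrome function. Then there exist σ_0, σ_1 ∈ F such that the code C ⊆ Σ_2^{bγ} consisting of all concatenations x_1 x_2 ⋯ x_γ with x_1 ∈ S^(0), and x_i ∈ S^(1) if the last bit of x_{i−1} equals 0 and x_i ∈ S^(0) otherwise (where S^(c) = {s ∈ Σ_2^b : f(s) = σ_c, s_1 = c, s_{t+1} ≠ s_{2t}, s_{b−t+1} = s_b}), is a segmented burst-of-t-deletions error-correcting code of size |C| ≥ (2^{b−3}/|F|)^γ. -/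

import Mathlib

/-- The one-burst-`t`-deletion ball `B_t^D(x)`: all sequences obtained from `x` by
deleting `t` consecutive symbols. -/
def burstDelBall {q : ℕ} (t : ℕ) (x : List (Fin q)) : Set (List (Fin q)) :=
  {y | ∃ i, i + t ≤ x.length ∧ y = x.take i ++ x.drop (i + t)}

/-- The `i`-th (0-indexed) segment of length `b` of `x`. -/
def seg {q : ℕ} (b : ℕ) (x : List (Fin q)) (i : ℕ) : List (Fin q) :=
  (x.drop (i * b)).take b

/-- The segmented burst-deletion ball `B^D_{γ,t}(x)`: concatenations `z_1 ⋯ z_γ`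
where each `z_i` is either the `i`-th segment of `x` or obtained from it by one
burst of `t` deletions. -/
def segBall {q : ℕ} (b t γ : ℕ) (x : List (Fin q)) : Set (List (Fin q)) :=
  {y | ∃ z : Fin γ → List (Fin q),
      (∀ i : Fin γ, z i = seg b x i ∨ z i ∈ burstDelBall t (seg b x i)) ∧
      y = (List.ofFn z).flatten}

/-- `f` is a one-burst-`t`-deletion syndrome function on length-`b` sequences. -/
def IsSyndrome {q : ℕ} (b t : ℕ) {F : Type*} (f : List (Fin q) → F) : Prop :=
  ∀ u v : List (Fin q), u.length = b → v.length = b → u ≠ v → f u = f v →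
    burstDelBall t u ∩ burstDelBall t v = ∅

/-- At most one burst of `t` deletions. -/
def Rcv (t : ℕ) (z s : List (Fin 2)) : Prop := z = s ∨ z ∈ burstDelBall t s

/-- The segment sequence `L` follows the code rule, starting with class `c`. -/
def CodeL (S : Fin 2 → Set (List (Fin 2))) (c : Fin 2) (L : List (List (Fin 2))) : Prop :=
  (∀ s ∈ L.head?, s ∈ S c) ∧
    List.IsChain (fun a b => ∀ d, a.getLast? = some d → b ∈ S (1 - d)) L

lemma CodeL.cons_iff {S : Fin 2 → Set (List (Fin 2))} {c : Fin 2} {s : List (Fin 2)}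
    {L : List (List (Fin 2))} {d : Fin 2} (hd : s.getLast? = some d) :
    CodeL S c (s :: L) ↔ s ∈ S c ∧ CodeL S (1 - d) L := by
  unfold CodeL
  rw [List.isChain_cons]
  simp [hd]

/-- The frozen set of segments. -/
def Sset {F : Type*} (b t : ℕ) (f : List (Fin 2) → F) (σ : Fin 2 → F) (c : Fin 2) :
    Set (List (Fin 2)) :=
  {s | s.length = b ∧ f s = σ c ∧ s[0]? = some c ∧
          s[t]? ≠ s[2 * t - 1]? ∧ s[b - t]? = s[b - 1]?}

lemma fin2_sub_ne (d : Fin 2) : (1 - d) ≠ d := by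
  revert d; decide

lemma exists_last {s : List (Fin 2)} (h : 0 < s.length) : ∃ d, s.getLast? = some d := by
  cases hh : s.getLast? with
  | none => simp at hh; simp [hh] at h
  | some d => exact ⟨d, rfl⟩

lemma asym {F : Type*} {b t : ℕ} (ht : 2 ≤ t) (h3t : 3 * t ≤ b)
    {f : List (Fin 2) → F} (hf : IsSyndrome b t f) {σ : Fin 2 → F} {c : Fin 2}
    {u v zv r r' : List (Fin 2)} {L' Z' : List (List (Fin 2))} {d : Fin 2}
    (hu : u ∈ Sset b t f σ c) (hv : v ∈ Sset b t f σ c)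
    (hzv : zv ∈ burstDelBall t v) (hd : v.getLast? = some d)
    (hL : CodeL (Sset b t f σ) (1 - d) L') (hZ : List.Forall₂ (Rcv t) Z' L')
    (hr' : r' = Z'.flatten) (hr0 : L' = [] → r = [])
    (h : u ++ r = zv ++ r') : False := by
  obtain ⟨hul, huf, hu0, hut, hub⟩ := hu
  obtain ⟨hvl, hvf, hv0, hvt, hvb⟩ := hv
  have hzl : zv.length = b - t := by
    obtain ⟨i, hi, rfl⟩ := hzv
    simp; omega
  have hzu : zv = u.take (b - t) := by
    have := congrArg (List.take (b - t)) h
    rw [List.take_append_of_le_length (by omega), List.take_append_of_le_length (by omega)] at this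
    rw [this, List.take_of_length_le (by omega)]
  have huv : u = v := by
    by_contra hne
    have := hf u v hul hvl hne (by rw [huf, hvf])
    have hm : zv ∈ burstDelBall t u ∩ burstDelBall t v :=
      ⟨⟨b - t, by omega, by rw [hzu, List.drop_of_length_le (by omega)]; simp⟩, hzv⟩
    rw [this] at hm
    exact hm
  subst huv
  cases hZ with
  | nil =>
    have := congrArg List.length h
    simp [hr0 rfl, hr', hzl, hul] at this
    omega
  | @cons z1 s1 Z L hz1 hZ =>
    have hs1 : s1 ∈ Sset b t f σ (1 - d) := hL.1 s1 (by simp)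
    obtain ⟨hsl, -, hs0, hst, -⟩ := hs1
    have hz1l : t ≤ z1.length := by
      rcases hz1 with rfl | ⟨i, hi, rfl⟩
      · omega
      · simp; omega
    have key : ∀ j, j < t → z1[j]? = u[b - t + j]? := by
      intro j hj
      have := congrArg (fun l => l[b - t + j]?) h
      rw [List.getElem?_append_left (by omega), List.getElem?_append_right (by omega), hzl, hr',
        Nat.add_sub_cancel_left, List.flatten_cons, List.getElem?_append_left (by omega)] at this
      exact this.symm
    have k0 := key 0 (by omega)
    have k1 := key (t - 1) (by omega)
    have e1 : b - t + (t - 1) = b - 1 := by omega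
    rw [e1] at k1
    rw [List.getLast?_eq_getElem?, hul] at hd
    rw [Nat.add_zero, hub, hd] at k0
    rw [hd] at k1
    have hne : s1[0]? ≠ some d := by
      rw [hs0]; intro h; exact fin2_sub_ne d (Option.some.inj h)
    rcases hz1 with rfl | ⟨i, hi, rfl⟩
    · exact hne k0
    · rcases Nat.eq_zero_or_pos i with rfl | hi0
      · simp only [List.take_zero, List.nil_append, Nat.zero_add, List.getElem?_drop] at k0 k1
        apply hst
        have e2 : t + (t - 1) = 2 * t - 1 := by omega
        rw [e2] at k1
        rw [Nat.add_zero] at k0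
        rw [k0, k1]
      · rw [List.getElem?_append_left (by simp; omega), List.getElem?_take_of_lt hi0] at k0
        exact hne k0

lemma uniq {F : Type*} {b t : ℕ} (ht : 2 ≤ t) (h3t : 3 * t ≤ b)
    {f : List (Fin 2) → F} (hf : IsSyndrome b t f) {σ : Fin 2 → F}
    (L : List (List (Fin 2))) : ∀ (c : Fin 2) (L' Z Z' : List (List (Fin 2))),
    L.length = L'.length → CodeL (Sset b t f σ) c L → CodeL (Sset b t f σ) c L' →
    List.Forall₂ (Rcv t) Z L → List.Forall₂ (Rcv t) Z' L' → Z.flatten = Z'.flatten → L = L' := by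
  induction L with
  | nil =>
    intro c L' Z Z' hl _ _ _ _ _
    exact (List.length_eq_zero_iff.mp hl.symm).symm
  | cons u L ih =>
    intro c L' Z Z' hl hL hL' hZ hZ' h
    cases L' with
    | nil => simp at hl
    | cons v L' =>
      cases hZ with
      | @cons zu _ Z _ hzu hZ =>
      cases hZ' with
      | @cons zv _ Z' _ hzv hZ' =>
      have hu : u ∈ Sset b t f σ c := hL.1 u (by simp)
      have hv : v ∈ Sset b t f σ c := hL'.1 v (by simp)
      have hul := hu.1
      have hvl := hv.1
      obtain ⟨d, hd⟩ := exists_last (s := u) (by omega)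
      obtain ⟨d', hd'⟩ := exists_last (s := v) (by omega)
      rw [CodeL.cons_iff hd] at hL
      rw [CodeL.cons_iff hd'] at hL'
      simp only [List.length_cons, Nat.add_right_cancel_iff] at hl
      simp only [List.flatten_cons] at h
      have fin : u = v → zu = zv → u :: L = v :: L' := by
        intro h1 h2
        subst h1 h2
        rw [hd] at hd'
        cases hd'
        rw [ih _ L' Z Z' hl hL.2 hL'.2 hZ hZ' (List.append_cancel_left h)]
      have zl : ∀ s z : List (Fin 2), s.length = b → z ∈ burstDelBall t s → z.length = b - t := by
        rintro s z hs ⟨i, hi, rfl⟩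
        simp; omega
      rcases hzu with rfl | hzu
      · rcases hzv with rfl | hzv
        · have := (List.append_inj h (by omega)).1
          exact fin this this
        · refine (asym ht h3t hf hu hv hzv hd' hL'.2 hZ' rfl ?_ h).elim
          rintro rfl
          simp at hl; subst hl
          cases hZ; rfl
      · rcases hzv with rfl | hzv
        · refine (asym ht h3t hf hv hu hzu hd hL.2 hZ rfl ?_ h.symm).elim
          rintro rfl
          have hl2 := List.length_eq_zero_iff.mp hl.symm
          subst hl2
          cases hZ'; rfl
        · have h1 := (List.append_inj h (by rw [zl u zu hul hzu, zl v zv hvl hzv])).1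
          refine fin ?_ h1
          by_contra hne
          have h2 := hf u v hul hvl hne (by rw [hu.2.1, hv.2.1])
          have : zu ∈ burstDelBall t u ∩ burstDelBall t v := ⟨hzu, h1 ▸ hzv⟩
          rw [h2] at this
          exact this

lemma codeL_len {F : Type*} {b t : ℕ} (hb : 0 < b)
    {f : List (Fin 2) → F} {σ : Fin 2 → F}
    (L : List (List (Fin 2))) : ∀ (c : Fin 2), CodeL (Sset b t f σ) c L → ∀ s ∈ L, s.length = b := by
  induction L with
  | nil => simp
  | cons u L ih =>
    intro c hL s hs
    have hu : u ∈ Sset b t f σ c := hL.1 u (by simp)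
    have hul := hu.1
    obtain ⟨d, hd⟩ := exists_last (s := u) (by omega)
    rw [CodeL.cons_iff hd] at hL
    rcases List.mem_cons.mp hs with rfl | hs
    · exact hul
    · exact ih _ hL.2 s hs

lemma seg_flatten {b : ℕ} (L : List (List (Fin 2))) : (∀ s ∈ L, s.length = b) →
    ∀ i (h : i < L.length), seg b L.flatten i = L[i] := by
  induction L with
  | nil => intro _ i h; simp at h
  | cons u L ih =>
    intro hb i h
    have hu : u.length = b := hb u (by simp)
    cases i with
    | zero =>
      simp only [seg, Nat.zero_mul, List.drop_zero, List.flatten_cons, List.getElem_cons_zero]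
      rw [List.take_append_of_le_length (by omega), List.take_of_length_le (by omega)]
    | succ i =>
      rw [List.getElem_cons_succ, ← ih (fun s hs => hb s (by simp [hs])) i (by simpa using h)]
      simp only [seg, List.flatten_cons]
      congr 1
      have : (i + 1) * b = u.length + i * b := by rw [hu]; ring
      rw [this, List.drop_append, List.drop_of_length_le (by omega)]
      simp

lemma segBall_flatten {b t γ : ℕ} {L : List (List (Fin 2))} (hb : ∀ s ∈ L, s.length = b)
    (hl : L.length = γ) {y : List (Fin 2)} (hy : y ∈ segBall b t γ L.flatten) :
    ∃ Z, List.Forall₂ (Rcv t) Z L ∧ y = Z.flatten := by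
  obtain ⟨z, hz, rfl⟩ := hy
  refine ⟨List.ofFn z, ?_, rfl⟩
  rw [List.forall₂_iff_get]
  refine ⟨by simp [hl], ?_⟩
  intro i h1 h2
  have := hz ⟨i, by omega⟩
  rw [seg_flatten L hb i h2] at this
  simpa [Rcv] using this

/-- Finite version of the code. -/
def Tset (A : Fin 2 → Finset (List (Fin 2))) : ℕ → Fin 2 → Finset (List (List (Fin 2)))
  | 0, _ => {[]}
  | n + 1, c => (A c).biUnion fun s =>
      (Tset A n (1 - (s.getLast?.getD 0))).image (List.cons s)

lemma Tset_card (A : Fin 2 → Finset (List (Fin 2))) (M : ℝ) (hM : 0 ≤ M)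
    (hA : ∀ c, M ≤ (A c).card) (n : ℕ) : ∀ c, M ^ n ≤ ((Tset A n c).card : ℝ) := by
  induction n with
  | zero => intro c; simp [Tset]
  | succ n ih =>
    intro c
    rw [Tset, Finset.card_biUnion]
    · simp_rw [Finset.card_image_of_injective _ (List.cons_injective)]
      push_cast
      calc M ^ (n + 1) = M * M ^ n := by ring
        _ ≤ (A c).card * M ^ n := by gcongr; exact hA c
        _ = ∑ s ∈ A c, M ^ n := by simp
        _ ≤ _ := Finset.sum_le_sum fun s _ => ih _
    · intro x _ y _ hxy
      simp only [Function.onFun]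
      rw [Finset.disjoint_left]
      intro l h1 h2
      simp only [Finset.mem_image] at h1 h2
      obtain ⟨a, -, rfl⟩ := h1
      obtain ⟨a', -, h⟩ := h2
      exact hxy (List.cons.inj h).1.symm

lemma mem_Tset {F : Type*} {b t : ℕ} (hb : 0 < b)
    {f : List (Fin 2) → F} {σ : Fin 2 → F} (A : Fin 2 → Finset (List (Fin 2)))
    (hA : ∀ c s, s ∈ A c ↔ s ∈ Sset b t f σ c) (n : ℕ) : ∀ c L,
    L ∈ Tset A n c ↔ L.length = n ∧ CodeL (Sset b t f σ) c L := by
  induction n with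
  | zero =>
    intro c L
    simp only [Tset, Finset.mem_singleton, List.length_eq_zero_iff]
    constructor
    · rintro rfl; simp [CodeL]
    · exact fun h => h.1
  | succ n ih =>
    intro c L
    simp only [Tset, Finset.mem_biUnion, Finset.mem_image, hA, ih]
    constructor
    · rintro ⟨s, hs, l, ⟨hl, hc⟩, rfl⟩
      have hsl := hs.1
      obtain ⟨d, hd⟩ := exists_last (s := s) (by omega)
      rw [CodeL.cons_iff hd]
      simp [hd] at hc
      exact ⟨by simp [hl], hs, hc⟩
    · rintro ⟨hl, hc⟩
      cases L with
      | nil => simp at hl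
      | cons s l =>
        have hs : s ∈ Sset b t f σ c := hc.1 s (by simp)
        have hsl := hs.1
        obtain ⟨d, hd⟩ := exists_last (s := s) (by omega)
        rw [CodeL.cons_iff hd] at hc
        exact ⟨s, hs, l, ⟨by simpa using hl, by simpa [hd] using hc.2⟩, rfl⟩

/-- Constraints without the syndrome. -/
def Gset (b t : ℕ) (c : Fin 2) : Set (List (Fin 2)) :=
  {s | s.length = b ∧ s[0]? = some c ∧
          s[t]? ≠ s[2 * t - 1]? ∧ s[b - t]? = s[b - 1]?}

lemma Gset_finite (b t : ℕ) (c : Fin 2) : (Gset b t c).Finite :=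
  (List.finite_length_eq (Fin 2) b).subset fun _ h => h.1

lemma Gset_card {b t : ℕ} (ht : 2 ≤ t) (h3t : 3 * t ≤ b) (c : Fin 2) :
    2 ^ (b - 3) ≤ (Gset_finite b t c).toFinset.card := by
  have i0 : 0 < b := by omega
  have i1 : 2 * t - 1 < b := by omega
  have i2 : b - 1 < b := by omega
  have i3 : t < b := by omega
  have i4 : b - t < b := by omega
  let m : (Fin b → Fin 2) → Fin b → Fin 2 := fun g i =>
    if i.val = 0 then c else if i.val = 2 * t - 1 then 1 - g ⟨t, i3⟩
    else if i.val = b - 1 then g ⟨b - t, i4⟩ else g i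
  let Φ : (Fin b → Fin 2) → (Fin 2 × Fin 2 × Fin 2) × List (Fin 2) := fun g =>
    ((g ⟨0, i0⟩, g ⟨2 * t - 1, i1⟩, g ⟨b - 1, i2⟩), List.ofFn (m g))
  have hinj : Function.Injective Φ := by
    intro g g' h
    simp only [Φ, Prod.mk.injEq] at h
    obtain ⟨⟨h0, h1, h2⟩, h3⟩ := h
    have h4 := List.ofFn_injective h3
    funext i
    by_cases e0 : i.val = 0
    · have : i = ⟨0, i0⟩ := Fin.ext e0
      rw [this, h0]
    by_cases e1 : i.val = 2 * t - 1
    · have : i = ⟨2 * t - 1, i1⟩ := Fin.ext e1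
      rw [this, h1]
    by_cases e2 : i.val = b - 1
    · have : i = ⟨b - 1, i2⟩ := Fin.ext e2
      rw [this, h2]
    have := congrFun h4 i
    simpa [m, e0, e1, e2] using this
  have hmaps : ∀ g ∈ (Finset.univ : Finset (Fin b → Fin 2)),
      Φ g ∈ (Finset.univ : Finset (Fin 2 × Fin 2 × Fin 2)) ×ˢ (Gset_finite b t c).toFinset := by
    intro g _
    simp only [Finset.mem_product, Finset.mem_univ, true_and, Set.Finite.mem_toFinset]
    have n1 : 2 * t - 1 ≠ 0 := by omega
    have n2 : b - 1 ≠ 0 := by omega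
    have n3 : b - 1 ≠ 2 * t - 1 := by omega
    have n4 : t ≠ 0 := by omega
    have n5 : t ≠ 2 * t - 1 := by omega
    have n6 : t ≠ b - 1 := by omega
    have n7 : b - t ≠ 0 := by omega
    have n8 : b - t ≠ 2 * t - 1 := by omega
    have n9 : b - t ≠ b - 1 := by omega
    refine ⟨by simp [Φ], ?_, ?_, ?_⟩
    · simp only [Φ, List.getElem?_ofFn, dif_pos i0]
      simp [m]
    · simp only [Φ, List.getElem?_ofFn, dif_pos i1, dif_pos i3]
      simp only [m, n1, n4, n5, n6, if_true, if_false]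
      intro h
      exact fin2_sub_ne _ (Option.some.inj h).symm
    · simp only [Φ, List.getElem?_ofFn, dif_pos i2, dif_pos i4]
      simp only [m, n2, n3, n7, n8, n9, if_true, if_false]
  have := Finset.card_le_card_of_injOn Φ hmaps hinj.injOn
  rw [Finset.card_product] at this
  simp only [Finset.card_univ, Fintype.card_fun, Fintype.card_prod, Fintype.card_fin] at this
  have e : 2 ^ b = 8 * 2 ^ (b - 3) := by
    have : b = 3 + (b - 3) := by omega
    conv_lhs => rw [this, pow_add]
    norm_num
  omega

lemma exists_sigma {b t : ℕ} (ht : 2 ≤ t) (h3t : 3 * t ≤ b)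
    (F : Type*) [Fintype F] [Nonempty F] (f : List (Fin 2) → F) (c : Fin 2) :
    ∃ s : F, ∃ A : Finset (List (Fin 2)), (∀ l, l ∈ A ↔ l ∈ Gset b t c ∧ f l = s) ∧
      (2 : ℝ) ^ (b - 3) / Fintype.card F ≤ A.card := by
  classical
  have hF : (0 : ℝ) < Fintype.card F := by exact_mod_cast Fintype.card_pos
  obtain ⟨s, -, hs⟩ := Finset.exists_le_card_fiber_of_nsmul_le_card_of_maps_to
    (s := (Gset_finite b t c).toFinset) (t := (Finset.univ : Finset F)) (f := f)
    (b := (2 : ℝ) ^ (b - 3) / Fintype.card F) (fun _ _ => Finset.mem_univ _)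
    Finset.univ_nonempty (by
      rw [nsmul_eq_mul, Finset.card_univ, mul_div_cancel₀ _ hF.ne']
      exact_mod_cast Gset_card ht h3t c)
  exact ⟨s, _, by simp, hs⟩

/-- there is a choice of syndrome values `σ_0, σ_1` for which the
binary segmented code is a segmented burst-of-`t`-deletions ECC of size at least
`(2^(b-3)/|F|)^γ`. -/
theorem stmt1 (b t γ : ℕ) (ht : 2 ≤ t) (hγ : 0 < γ) (h3t : 3 * t ≤ b)
    (F : Type*) [Fintype F] [Nonempty F]
    (f : List (Fin 2) → F) (hf : IsSyndrome b t f) :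
    ∃ σ : Fin 2 → F,
    ∀ S : Fin 2 → Set (List (Fin 2)),
      S = (fun c => {s | s.length = b ∧ f s = σ c ∧ s[0]? = some c ∧
          s[t]? ≠ s[2 * t - 1]? ∧ s[b - t]? = s[b - 1]?}) →
    ∀ C : Set (List (Fin 2)),
      C = {x | ∃ z : Fin γ → List (Fin 2),
          x = (List.ofFn z).flatten ∧
          z ⟨0, hγ⟩ ∈ S 0 ∧
          ∀ i : Fin γ, 0 < i.val → ∀ c : Fin 2,
            (z ⟨i.val - 1, Nat.lt_of_le_of_lt (Nat.pred_le _) i.isLt⟩).getLast?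
              = some c →
            z i ∈ S (1 - c)} →
      (∀ x ∈ C, ∀ x' ∈ C, x ≠ x' →
        segBall b t γ x ∩ segBall b t γ x' = ∅) ∧
      ((2 : ℝ) ^ (b - 3) / Fintype.card F) ^ γ ≤ (C.ncard : ℝ) := by
  choose σ A hA hcard using fun c => exists_sigma ht h3t F f c
  refine ⟨σ, ?_⟩
  intro S hS C hC
  have hS' : S = Sset b t f σ := hS
  clear hS
  subst hS'
  have hb : 0 < b := by omega
  have hAS : ∀ c s, s ∈ A c ↔ s ∈ Sset b t f σ c := by
    intro c s
    rw [hA]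
    simp only [Gset, Sset, Set.mem_setOf_eq]
    tauto
  have hC' : C = Set.image List.flatten (↑(Tset A γ 0) : Set (List (List (Fin 2)))) := by
    rw [hC]
    ext x
    simp only [Set.mem_setOf_eq, Set.mem_image, Finset.mem_coe, mem_Tset hb A hAS]
    constructor
    · rintro ⟨z, rfl, h0, h1⟩
      refine ⟨List.ofFn z, ⟨by simp, ?_, ?_⟩, rfl⟩
      · intro s hs
        rw [List.head?_eq_getElem?, List.getElem?_ofFn, dif_pos hγ] at hs
        simp only [Option.mem_def, Option.some.injEq] at hs
        exact hs ▸ h0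
      · rw [List.isChain_iff_getElem]
        intro i hi d hd
        simp only [List.getElem_ofFn] at hd ⊢
        exact h1 ⟨i + 1, by simpa using hi⟩ (by simp) d hd
    · rintro ⟨L, ⟨hl, h0, h1⟩, rfl⟩
      subst hl
      refine ⟨fun i => L[i.val], ?_, ?_, ?_⟩
      · simp
      · apply h0
        rw [List.head?_eq_getElem?]
        simp [hγ]
      · rw [List.isChain_iff_getElem] at h1
        rintro ⟨i, hi⟩ hi0 d hd
        cases i with
        | zero => simp at hi0
        | succ i => exact h1 i hi d hd
  rw [hC']
  constructor
  · rintro x ⟨L, hL, rfl⟩ x' ⟨L', hL', rfl⟩ hne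
    rw [Finset.mem_coe, mem_Tset hb A hAS] at hL hL'
    rw [Set.eq_empty_iff_forall_notMem]
    rintro y ⟨hy, hy'⟩
    obtain ⟨Z, hZ, e⟩ := segBall_flatten (codeL_len hb L 0 hL.2) hL.1 hy
    obtain ⟨Z', hZ', e'⟩ := segBall_flatten (codeL_len hb L' 0 hL'.2) hL'.1 hy'
    apply hne
    rw [uniq ht h3t hf L 0 L' Z Z' (by rw [hL.1, hL'.1]) hL.2 hL'.2 hZ hZ' (by rw [← e, ← e'])]
  · rw [Set.ncard_image_of_injOn, Set.ncard_coe_finset]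
    · exact Tset_card A _ (by positivity) hcard γ 0
    · intro L hL L' hL' h
      rw [Finset.mem_coe, mem_Tset hb A hAS] at hL hL'
      have rfl' : ∀ l : List (List (Fin 2)), List.Forall₂ (Rcv t) l l :=
        fun l => List.forall₂_same.mpr fun _ _ => Or.inl rfl
      exact uniq ht h3t hf L 0 L' L L' (by rw [hL.1, hL'.1]) hL.2 hL'.2 (rfl' _) (rfl' _) h
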